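/- arXiv:math/0209257 — 2 statements merged into one kernel-verified Lean document; each statement's English description precedes it below -/
import Mathlib

section
/- Let R be a Noetherian ring, N ⊊ M finitely generated R-modules, and X ⊆ Ass(M/N). If the primary decompositions of N in M are independent over X (i.e., for any two irredundant minimal primary decompositions of N in M, the intersections of the primary components corresponding to primes in X agree), then X is an open subset of Ass(M/N) in the topology induced from Spec(R), i.e., X is stable under specialization within Ass(M/N): if P ∈ X, P' ∈ Ass(M/N), and P' ⊆ P, then P' ∈ X. -/
open Submodule

variable {R M : Type*} [CommRing R] [AddCommGroup M] [Module R M]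

/-- The saturation `(N :_M J^∞) = ∪ₙ (N :_M Jⁿ)`. -/
def sat (J : Ideal R) (N : Submodule R M) : Submodule R M :=
  ⨆ n : ℕ, ⨅ r ∈ (J ^ n : Ideal R), N.comap (LinearMap.lsmul R M r)

/-- `Jⁿ L ⊓ N ≤ J^(n-k) N` for all `n ≥ k`, i.e. the Artin–Rees number is at most `k`. -/
def ARle (J : Ideal R) (N L : Submodule R M) (k : ℕ) : Prop :=
  ∀ n, k ≤ n → (J ^ n • L) ⊓ N ≤ J ^ (n - k) • N

/-- The Artin–Rees number `AR(J, N ⊆ L)`. -/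
noncomputable def AR (J : Ideal R) (N L : Submodule R M) : ℕ := sInf {k | ARle J N L k}

/-- `N = ⨅ i, Q i` is an irredundant minimal primary decomposition, with `Q i` being
`P i`-primary. -/
def IsMinPD (N : Submodule R M) {s : ℕ} (P : Fin s → Ideal R) (Q : Fin s → Submodule R M) :
    Prop :=
  (∀ i, associatedPrimes R (M ⧸ Q i) = {P i}) ∧
  Function.Injective P ∧
  N = ⨅ i, Q i ∧
  ∀ i : Fin s, N ≠ ⨅ j ∈ ({i}ᶜ : Set (Fin s)), Q j

/-- `Q` is a `P`-primary component of `N` in `M`: it occurs as the `P`-primary component of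
some irredundant minimal primary decomposition of `N` in `M`. -/
def IsPrimaryComponent (N : Submodule R M) (P : Ideal R) (Q : Submodule R M) : Prop :=
  ∃ (s : ℕ) (P' : Fin s → Ideal R) (Q' : Fin s → Submodule R M) (i : Fin s),
    IsMinPD N P' Q' ∧ P' i = P ∧ Q' i = Q
/-- Primary decompositions of `N ⊆ M` are independent over `X`. -/
def IndepOver (N : Submodule R M) (X : Set (Ideal R)) : Prop :=
  ∀ (s : ℕ) (P : Fin s → Ideal R) (Q Q' : Fin s → Submodule R M),
    IsMinPD N P Q → IsMinPD N P Q' →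
    (⨅ i ∈ {i : Fin s | P i ∈ X}, Q i) = ⨅ i ∈ {i : Fin s | P i ∈ X}, Q' i


/-!
Suppose `P ∈ X`, and let `Q` be the `P`-component of a minimal primary decomposition of `N`. For
large `n` the contraction to `M` of `(N + Pⁿ M)_P` is a `P`-primary submodule between `N` and `Q`,
so it may replace `Q`. Independence over `X` therefore puts the intersection of the components with
primes in `X` inside every one of these contractions, hence, by Krull's intersection theorem over
`R_P`, inside the contraction of `N_P`. The latter lies in the `P'`-component for every associated
prime `P' ≤ P`; if `P'` were not in `X`, that component would be redundant.
-/

section AssociatedPrimes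

lemma associatedPrimes_quotient (N : Submodule R M) :
    associatedPrimes R (M ⧸ N) = N.associatedPrimes := by
  have colon_bot (x : M) : (⊥ : Submodule R (M ⧸ N)).colon {N.mkQ x} = N.colon {x} := by
    ext r
    rw [mem_colon_singleton, mem_colon_singleton, ← map_smul, mem_bot, mkQ_apply,
      Quotient.mk_eq_zero]
  ext p
  simp only [AssociatedPrimes.mem_iff, IsAssociatedPrime, AssociatePrimes.mem_iff,
    Submodule.isAssociatedPrime_def, N.mkQ_surjective.exists, colon_bot]

lemma exists_mem_associatedPrimes_of_finsetInf {ι : Type*} {t : Finset ι} {Q : ι → Submodule R M}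
    {p : Ideal R} (hp : p ∈ (t.inf Q).associatedPrimes) : ∃ i ∈ t, p ∈ (Q i).associatedPrimes := by
  obtain ⟨hp, x, rfl⟩ := hp
  have radical_colon : ((t.inf Q).colon {x}).radical =
      t.inf fun i ↦ ((Q i).colon {x}).radical := by
    rw [colon_finsetInf, ← Ideal.radicalInfTopHom_apply, map_finset_inf]
    rfl
  rw [radical_colon] at hp ⊢
  obtain ⟨i, hi, hpi⟩ := Ideal.eq_inf_of_isPrime_inf hp
  exact ⟨i, hi, hpi ▸ hp, x, hpi.symm⟩

lemma associatedPrimes_quotient_of_isPrimary {Q : Submodule R M} (hQ : Q.IsPrimary) :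
    associatedPrimes R (M ⧸ Q) = {(Q.colon Set.univ).radical} := by
  have hmin : Q.IsMinimalPrimaryDecomposition {Q} :=
    { inf_eq := Finset.inf_singleton
      primary := by simpa using hQ
      distinct := by simp
      minimal := by simpa using hQ.ne_top }
  rw [associatedPrimes_quotient, ← hmin.image_radical_eq_associated_primes, Finset.coe_singleton,
    Set.image_singleton]

lemma isPrimary_of_associatedPrimes_quotient_eq_singleton [IsNoetherianRing R] [Module.Finite R M]
    {Q : Submodule R M} {P : Ideal R} (hQ : associatedPrimes R (M ⧸ Q) = {P}) : Q.IsPrimary := by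
  have hP : P ≤ (Q.colon Set.univ).radical := by
    rw [← annihilator_quotient, ← Ideal.sInf_minimalPrimes]
    refine le_sInf fun p hp ↦ ?_
    have hpQ := Module.associatedPrimes.minimalPrimes_annihilator_subset_associatedPrimes R _ hp
    rw [hQ] at hpQ
    exact hpQ.ge
  have zeroDivisors_eq := biUnion_associatedPrimes_eq_zero_divisors R (M ⧸ Q)
  rw [hQ, Set.biUnion_singleton] at zeroDivisors_eq
  refine ⟨?_, fun {r x} hrx ↦ or_iff_not_imp_left.mpr fun hx ↦ hP ?_⟩
  · rintro rfl
    rw [associatedPrimes.eq_empty_of_subsingleton] at hQ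
    exact Set.singleton_ne_empty P hQ.symm
  · rw [← SetLike.mem_coe, zeroDivisors_eq]
    exact ⟨Q.mkQ x, by simpa using hx,
      by rwa [← map_smul, mkQ_apply, Quotient.mk_eq_zero]⟩

end AssociatedPrimes

section Saturation

/-- The saturation of `N` with respect to a multiplicative set `S`: the preimage in `M` of the
submodule `S⁻¹N` of `S⁻¹M`. For `S` the complement of a prime `P` this is the contraction to `M` of
the localization of `N` at `P`. -/
noncomputable def localSaturation (S : Submonoid R) (N : Submodule R M) : Submodule R M :=
  ((N.localized S).restrictScalars R).comap (LocalizedModule.mkLinearMap S M)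

lemma mem_localSaturation {S : Submonoid R} {N : Submodule R M} {x : M} :
    x ∈ localSaturation S N ↔ ∃ r ∈ S, r • x ∈ N := by
  set f := LocalizedModule.mkLinearMap S M
  constructor
  · rintro ⟨y, hy, t, hyx⟩
    rw [IsLocalizedModule.mk'_eq_iff, ← LinearMap.map_smul_of_tower] at hyx
    obtain ⟨c, hc⟩ := (IsLocalizedModule.eq_iff_exists S f).mp hyx
    refine ⟨c * t, mul_mem c.2 t.2, ?_⟩
    rw [mul_smul]
    exact hc ▸ N.smul_mem (c : R) hy
  · rintro ⟨r, hr, hrx⟩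
    exact ⟨r • x, hrx, ⟨r, hr⟩, IsLocalizedModule.mk'_cancel f x ⟨r, hr⟩⟩

lemma localSaturation_mono (S : Submonoid R) :
    Monotone (localSaturation S : Submodule R M → Submodule R M) :=
  fun _ _ h ↦ comap_mono ((localized'gi (Localization S) S _).gc.monotone_l h)

lemma le_localSaturation (S : Submonoid R) (N : Submodule R M) : N ≤ localSaturation S N :=
  (localized'gi (Localization S) S _).gc.le_u_l N

lemma localSaturation_le_of_isPrimary {S : Submonoid R} {N Q : Submodule R M} (hQ : Q.IsPrimary)
    (hQS : Disjoint (S : Set R) (Q.colon Set.univ).radical) (hNQ : N ≤ Q) :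
    localSaturation S N ≤ Q := by
  intro x hx
  obtain ⟨r, hr, hrx⟩ := mem_localSaturation.mp hx
  exact (hQ.mem_or_mem (hNQ hrx)).resolve_right (Set.disjoint_left.mp hQS hr)

lemma associatedPrimes_quotient_localSaturation {P : Ideal R} [hP : P.IsPrime]
    {L : Submodule R M} {n : ℕ} (hn : P ^ n • ⊤ ≤ L) (hL : localSaturation P.primeCompl L ≠ ⊤) :
    associatedPrimes R (M ⧸ localSaturation P.primeCompl L) = {P} := by
  set T := localSaturation P.primeCompl L
  have mem_of_smul_mem {r : R} {x : M} (hr : r ∉ P) (hrx : r • x ∈ T) : x ∈ T := by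
    obtain ⟨t, ht, htrx⟩ := mem_localSaturation.mp hrx
    exact mem_localSaturation.mpr ⟨t * r, mul_mem ht hr, by rwa [mul_smul]⟩
  have radical_colon : (T.colon Set.univ).radical = P := by
    apply le_antisymm
    · refine hP.radical_le_iff.mpr fun r hr ↦ by_contra fun hrP ↦ hL (eq_top_iff.mpr fun x _ ↦ ?_)
      exact mem_of_smul_mem hrP (mem_colon.mp hr x trivial)
    · refine fun r hr ↦ ⟨n, mem_colon.mpr fun x _ ↦ le_localSaturation _ L (hn ?_)⟩
      exact smul_mem_smul (Ideal.pow_mem_pow hr n) mem_top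
  have isPrimary : T.IsPrimary := by
    refine ⟨hL, fun {r x} hrx ↦ or_iff_not_imp_right.mpr fun hr ↦ mem_of_smul_mem ?_ hrx⟩
    rwa [← radical_colon]
  rw [associatedPrimes_quotient_of_isPrimary isPrimary, radical_colon]

lemma iInf_sup_pow_smul_top [IsNoetherianRing R] [IsLocalRing R] [Module.Finite R M] {I : Ideal R}
    (hI : I ≠ ⊤) (N : Submodule R M) : ⨅ n : ℕ, N ⊔ I ^ n • ⊤ = N := by
  have comap_mkQ (n : ℕ) : (I ^ n • ⊤ : Submodule R (M ⧸ N)).comap N.mkQ = N ⊔ I ^ n • ⊤ := by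
    rw [← comap_map_mkQ, map_smul'', Submodule.map_top, range_mkQ]
  simp_rw [← comap_mkQ]
  rw [← comap_iInf, Ideal.iInf_pow_smul_eq_bot_of_isLocalRing I hI, comap_bot, ker_mkQ]

lemma localized_sup_smul_top (S : Submonoid R) (N : Submodule R M) (I : Ideal R) :
    (N ⊔ I • ⊤).localized S = N.localized S ⊔ I.map (algebraMap R (Localization S)) • ⊤ := by
  let f := LocalizedModule.mkLinearMap S M
  have localized_smul_top := localized'_smul (Localization S) S f ⊤ I
  rw [Ideal.localized'_eq_map, localized'_top] at localized_smul_top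
  rw [← localized_smul_top]
  exact (localized'gi (Localization S) S f).gc.l_sup

lemma iInf_localSaturation_sup_pow_smul_top [IsNoetherianRing R] [Module.Finite R M]
    (P : Ideal R) [P.IsPrime] (N : Submodule R M) :
    ⨅ n : ℕ, localSaturation P.primeCompl (N ⊔ P ^ n • ⊤) = localSaturation P.primeCompl N := by
  have krull := iInf_sup_pow_smul_top
    (IsLocalRing.maximalIdeal.isMaximal (Localization.AtPrime P)).ne_top (N.localized P.primeCompl)
  simp only [localSaturation, localized_sup_smul_top, Ideal.map_pow,
    Localization.AtPrime.map_eq_maximalIdeal]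
  rw [← comap_iInf, ← restrictScalars_iInf, krull]

end Saturation

namespace IsMinPD

variable {N : Submodule R M} {s : ℕ} {P : Fin s → Ideal R} {Q : Fin s → Submodule R M}

lemma le_component (h : IsMinPD N P Q) (i : Fin s) : N ≤ Q i :=
  h.2.2.1.trans_le (iInf_le Q i)

lemma mem_of_biInf_le (h : IsMinPD N P Q) {S : Set (Fin s)} {i : Fin s}
    (hS : ⨅ j ∈ S, Q j ≤ Q i) : i ∈ S := by
  by_contra hi
  have hcompl : ⨅ j ∈ ({i}ᶜ : Set (Fin s)), Q j ≤ Q i :=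
    (biInf_mono fun j hj ↦ ne_of_mem_of_not_mem hj hi).trans hS
  refine h.2.2.2 i (le_antisymm (le_iInf₂ fun j _ ↦ h.le_component j) ?_)
  rw [h.2.2.1]
  refine le_iInf fun j ↦ ?_
  obtain rfl | hj := eq_or_ne j i
  · exact hcompl
  · exact iInf₂_le j hj

lemma isPrimary [IsNoetherianRing R] [Module.Finite R M] (h : IsMinPD N P Q) (i : Fin s) :
    (Q i).IsPrimary :=
  isPrimary_of_associatedPrimes_quotient_eq_singleton (h.1 i)

lemma radical_colon_eq [IsNoetherianRing R] [Module.Finite R M] (h : IsMinPD N P Q) (i : Fin s) :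
    ((Q i).colon Set.univ).radical = P i :=
  Set.singleton_injective <|
    (associatedPrimes_quotient_of_isPrimary (h.isPrimary i)).symm.trans (h.1 i)

lemma localSaturation_le [IsNoetherianRing R] [Module.Finite R M] (h : IsMinPD N P Q) {i : Fin s}
    {p : Ideal R} [p.IsPrime] (hp : P i ≤ p) {L : Submodule R M} (hL : L ≤ Q i) :
    localSaturation p.primeCompl L ≤ Q i := by
  refine localSaturation_le_of_isPrimary (h.isPrimary i) ?_ hL
  rw [h.radical_colon_eq]
  exact Set.disjoint_compl_left_iff_subset.mpr hp

lemma exists_pow_smul_top_le [IsNoetherianRing R] [Module.Finite R M] (h : IsMinPD N P Q)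
    (i : Fin s) : ∃ n, P i ^ n • ⊤ ≤ Q i := by
  obtain ⟨n, hn⟩ := Ideal.exists_radical_pow_le_of_fg ((Q i).colon Set.univ)
    (IsNoetherian.noetherian _)
  rw [h.radical_colon_eq] at hn
  exact ⟨n, smul_le.mpr fun r hr x _ ↦ mem_colon.mp (hn hr) x trivial⟩

lemma of_forall_mem_associatedPrimes (hass : ∀ i, associatedPrimes R (M ⧸ Q i) = {P i})
    (hinj : Function.Injective P) (hN : N = ⨅ i, Q i)
    (hmem : ∀ i, P i ∈ associatedPrimes R (M ⧸ N)) : IsMinPD N P Q := by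
  classical
  refine ⟨hass, hinj, hN, fun i hi ↦ ?_⟩
  have hN_inf : N = ({i}ᶜ : Finset (Fin s)).inf Q := by
    rw [hi, Finset.inf_eq_iInf]
    simp
  have hPi := hmem i
  rw [associatedPrimes_quotient, hN_inf] at hPi
  obtain ⟨j, hj, hPj⟩ := exists_mem_associatedPrimes_of_finsetInf hPi
  rw [← associatedPrimes_quotient, hass] at hPj
  exact Finset.mem_compl.mp hj (Finset.mem_singleton.mpr (hinj hPj).symm)

open scoped Classical in
lemma isMinimalPrimaryDecomposition [IsNoetherianRing R] [Module.Finite R M] (h : IsMinPD N P Q) :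
    N.IsMinimalPrimaryDecomposition (Finset.univ.image Q) := by
  have hQ : Function.Injective Q := fun i j hij ↦ h.2.1 <| by
    rw [← h.radical_colon_eq, hij, h.radical_colon_eq]
  constructor
  · rw [Finset.inf_image, Function.id_comp, Finset.inf_univ_eq_iInf, ← h.2.2.1]
  · simpa using h.isPrimary
  · simp only [Finset.coe_image, Finset.coe_univ, Set.image_univ]
    rintro _ ⟨i, rfl⟩ _ ⟨j, rfl⟩ hij
    simpa only [Function.onFun, h.radical_colon_eq] using h.2.1.ne (ne_of_apply_ne Q hij)
  · simp only [Finset.mem_image, Finset.mem_univ, true_and]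
    rintro _ ⟨i, rfl⟩ hi
    rw [← Finset.image_erase hQ, Finset.inf_image, Function.id_comp, Finset.inf_eq_iInf] at hi
    exact Finset.notMem_erase i _ (h.mem_of_biInf_le (S := ↑(Finset.univ.erase i)) hi)

lemma range_eq_associatedPrimes [IsNoetherianRing R] [Module.Finite R M] (h : IsMinPD N P Q) :
    Set.range P = associatedPrimes R (M ⧸ N) := by
  classical
  rw [associatedPrimes_quotient,
    ← h.isMinimalPrimaryDecomposition.image_radical_eq_associated_primes, Finset.coe_image,
    Finset.coe_univ, Set.image_univ, ← Set.range_comp]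
  exact congrArg Set.range (funext fun i ↦ (h.radical_colon_eq i).symm)

lemma update [IsNoetherianRing R] [Module.Finite R M] (h : IsMinPD N P Q) {i : Fin s}
    {T : Submodule R M} (hT : associatedPrimes R (M ⧸ T) = {P i}) (hNT : N ≤ T) (hTQ : T ≤ Q i) :
    IsMinPD N P (Function.update Q i T) := by
  refine of_forall_mem_associatedPrimes ?_ h.2.1 (le_antisymm ?_ ?_)
    fun j ↦ h.range_eq_associatedPrimes ▸ Set.mem_range_self j
  · intro j
    obtain rfl | hj := eq_or_ne j i
    · rwa [Function.update_self]
    · rw [Function.update_of_ne hj, h.1]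
  · refine le_iInf fun j ↦ ?_
    obtain rfl | hj := eq_or_ne j i
    · rwa [Function.update_self]
    · exact (h.le_component j).trans_eq (Function.update_of_ne hj T Q).symm
  · exact (iInf_mono (update_le_self_iff.mpr hTQ)).trans_eq h.2.2.1.symm

end IsMinPD

lemma exists_isMinPD [IsNoetherian R M] (N : Submodule R M) :
    ∃ (s : ℕ) (P : Fin s → Ideal R) (Q : Fin s → Submodule R M), IsMinPD N P Q := by
  obtain ⟨t, ht⟩ := (isLasker R M).exists_isMinimalPrimaryDecomposition N
  let Q (i : Fin t.card) : Submodule R M := t.equivFin.symm i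
  have hQ (i : Fin t.card) : Q i ∈ t := (t.equivFin.symm i).2
  have iInf_Q : N = ⨅ i, Q i := by
    rw [t.equivFin.symm.iInf_comp (g := fun q : t ↦ q.1), iInf_subtype, ← ht.inf_eq,
      Finset.inf_eq_iInf]
    rfl
  refine ⟨t.card, fun i ↦ ((Q i).colon Set.univ).radical, Q,
    IsMinPD.of_forall_mem_associatedPrimes
      (fun i ↦ associatedPrimes_quotient_of_isPrimary (ht.primary (hQ i)))
      (fun i j hij ↦ ?_) iInf_Q fun i ↦ ?_⟩
  · exact t.equivFin.symm.injective <| Subtype.ext <|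
      IsMinimalPrimaryDecomposition.injOn N t ht (hQ i) (hQ j) hij
  · rw [associatedPrimes_quotient]
    exact ht.mem_associatedPrimes (hQ i)

lemma IndepOver.biInf_le_localSaturation [IsNoetherianRing R] [Module.Finite R M]
    {N : Submodule R M} {X : Set (Ideal R)} (hX : IndepOver N X) {s : ℕ} {P : Fin s → Ideal R}
    {Q : Fin s → Submodule R M} (h : IsMinPD N P Q) {a : Fin s} [(P a).IsPrime] (ha : P a ∈ X) :
    ⨅ i ∈ {i | P i ∈ X}, Q i ≤ localSaturation (P a).primeCompl N := by
  obtain ⟨k, hk⟩ := h.exists_pow_smul_top_le a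
  rw [← iInf_localSaturation_sup_pow_smul_top]
  refine le_iInf fun n ↦ ?_
  set T := localSaturation (P a).primeCompl (N ⊔ P a ^ (n + k) • ⊤)
  have hTQ : T ≤ Q a :=
    h.localSaturation_le le_rfl <|
      sup_le (h.le_component a) ((smul_mono_left (Ideal.pow_le_pow_right (by lia))).trans hk)
  have hTass : associatedPrimes R (M ⧸ T) = {P a} :=
    associatedPrimes_quotient_localSaturation le_sup_right
      (ne_top_of_le_ne_top (h.isPrimary a).ne_top hTQ)
  have hNT : N ≤ T := le_sup_left.trans (le_localSaturation _ _)
  calc ⨅ i ∈ {i | P i ∈ X}, Q i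
      = ⨅ i ∈ {i | P i ∈ X}, Function.update Q a T i :=
        hX s P Q _ h (h.update hTass hNT hTQ)
    _ ≤ T := (iInf₂_le a ha).trans_eq (Function.update_self a T Q)
    _ ≤ localSaturation (P a).primeCompl (N ⊔ P a ^ n • ⊤) :=
        localSaturation_mono _ <| sup_le_sup_left
          (smul_mono_left (Ideal.pow_le_pow_right (by lia))) N

/-- Theorem 2.2, "only if" direction: independence over `X` implies `X` is stable under
specialization within `Ass(M/N)`, i.e. open in `Ass(M/N)`. -/
theorem indep_imp_open [IsNoetherianRing R] [Module.Finite R M]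
    (N : Submodule R M) (hN : N ≠ ⊤) (X : Set (Ideal R))
    (hX : X ⊆ associatedPrimes R (M ⧸ N)) (hInd : IndepOver N X) :
    ∀ P ∈ X, ∀ P' ∈ associatedPrimes R (M ⧸ N), P' ≤ P → P' ∈ X := by
  intro p hp p' hp' hle
  obtain ⟨s, P, Q, h⟩ := exists_isMinPD N
  obtain ⟨a, rfl⟩ : p ∈ Set.range P := h.range_eq_associatedPrimes ▸ hX hp
  obtain ⟨b, rfl⟩ : p' ∈ Set.range P := h.range_eq_associatedPrimes ▸ hp'
  have : (P a).IsPrime := (hX hp).isPrime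
  have hab : localSaturation (P a).primeCompl N ≤ Q b :=
    h.localSaturation_le hle (h.le_component b)
  exact h.mem_of_biInf_le ((hInd.biInf_le_localSaturation h hp).trans hab)
end

section
/- Let R be a Noetherian ring, M a finitely generated R-module, N ⊊ M a submodule, and P ∈ Ass(M/N). Then P ∉ Ass(M / (N :_M P^∞)), where (N :_M P^∞) = ∪_i (N :_M P^i). -/
open Submodule

variable {R M : Type*} [CommRing R] [AddCommGroup M] [Module R M]

/-!
When `J` is finitely generated, saturating twice adds nothing: if `Jᵏ x ⊆ (N :_M J^∞)` then, `Jᵏ x`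
being finitely generated, a single power `Jⁿ` carries it into `N`, so `Jⁿ⁺ᵏ x ⊆ N`. A prime
`P ⊇ J` associated to `M / (N :_M J^∞)` would be the radical of the annihilator of the class of
some `x`. Some power of `J` would kill that class, forcing `x ∈ (N :_M J^∞)` and `P = R`.
-/

section Colon

variable {N L : Submodule R M}

lemma smul_le_iff_le_colon {I : Ideal R} : I • L ≤ N ↔ I ≤ N.colon (L : Set M) :=
  smul_le.trans (forall₂_congr fun _ _ ↦ mem_colon.symm)

lemma colon_bot_singleton_mkQ (N : Submodule R M) (x : M) :
    (⊥ : Submodule R (M ⧸ N)).colon {N.mkQ x} = N.colon {x} := by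
  ext r
  rw [mem_colon_singleton, mem_colon_singleton, mem_bot, ← map_smul, mkQ_apply,
    Quotient.mk_eq_zero]

end Colon

section Saturation

variable (J : Ideal R) {N L : Submodule R M}

lemma le_iInf_comap_lsmul_iff (I : Ideal R) :
    L ≤ ⨅ r ∈ I, N.comap (LinearMap.lsmul R M r) ↔ I • L ≤ N := by
  simp only [le_iInf_iff, smul_le]
  rfl

lemma monotone_iInf_pow_comap_lsmul (N : Submodule R M) :
    Monotone fun n : ℕ ↦ ⨅ r ∈ J ^ n, N.comap (LinearMap.lsmul R M r) :=
  fun _ _ hmn ↦ biInf_mono fun _ hr ↦ Ideal.pow_le_pow_right hmn hr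

lemma le_sat_of_pow_smul_le {n : ℕ} (h : J ^ n • L ≤ N) : L ≤ sat J N :=
  le_iSup_of_le n ((le_iInf_comap_lsmul_iff (J ^ n)).mpr h)

lemma le_sat_iff_exists_pow_smul_le (hL : L.FG) :
    L ≤ sat J N ↔ ∃ n : ℕ, J ^ n • L ≤ N := by
  refine ⟨fun h ↦ ?_, fun ⟨_, h⟩ ↦ le_sat_of_pow_smul_le J h⟩
  obtain ⟨_, ⟨n, rfl⟩, hn⟩ := (fg_iff_compact L).mp hL _ _ (Set.range_nonempty _)
    (monotone_iInf_pow_comap_lsmul J N).directed_le.directedOn_range isLUB_iSup h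
  exact ⟨n, (le_iInf_comap_lsmul_iff (J ^ n)).mp hn⟩

lemma mem_sat_iff_exists_pow_le_colon {x : M} :
    x ∈ sat J N ↔ ∃ n : ℕ, J ^ n ≤ N.colon {x} := by
  rw [← span_singleton_le_iff_mem, le_sat_iff_exists_pow_smul_le J (fg_span_singleton x)]
  simp only [smul_le_iff_le_colon, colon_span]

lemma le_sat (N : Submodule R M) : N ≤ sat J N :=
  le_sat_of_pow_smul_le J (n := 0) smul_le_right

variable {J}

lemma sat_sat (hJ : J.FG) (N : Submodule R M) : sat J (sat J N) = sat J N := by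
  refine le_antisymm (fun x hx ↦ ?_) (le_sat J _)
  rw [← span_singleton_le_iff_mem] at hx ⊢
  have hspan : (span R {x}).FG := fg_span_singleton x
  obtain ⟨k, hk⟩ := (le_sat_iff_exists_pow_smul_le J hspan).mp hx
  have hpow_smul : (J ^ k • span R {x}).FG := Submodule.FG.smul (Ideal.FG.pow hJ) hspan
  obtain ⟨n, hn⟩ := (le_sat_iff_exists_pow_smul_le J hpow_smul).mp hk
  rw [← mul_smul, ← pow_add] at hn
  exact le_sat_of_pow_smul_le J hn

end Saturation

theorem not_mem_associatedPrimes_saturation_general {J P : Ideal R} (hJ : J.FG) (hJP : J ≤ P)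
    (N : Submodule R M) : P ∉ associatedPrimes R (M ⧸ sat J N) := by
  rintro ⟨hP, y, hy⟩
  obtain ⟨x, rfl⟩ := (sat J N).mkQ_surjective y
  rw [colon_bot_singleton_mkQ] at hy
  obtain ⟨k, hk⟩ := Ideal.exists_pow_le_of_le_radical_of_fg (hJP.trans_eq hy) hJ
  have hx : x ∈ sat J N := by
    rw [← sat_sat hJ, mem_sat_iff_exists_pow_le_colon]
    exact ⟨k, hk⟩
  have hcolon : (sat J N).colon {x} = ⊤ :=
    (colon_eq_top_iff_subset _).mpr (Set.singleton_subset_iff.mpr hx)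
  exact hP.ne_top (by rw [hy, hcolon, Ideal.radical_top])

/-- If `P ∈ Ass(M/N)` then `P ∉ Ass(M/(N :_M P^∞))`. -/
theorem not_mem_associatedPrimes_saturation [IsNoetherianRing R] [Module.Finite R M]
    (N : Submodule R M) (hN : N ≠ ⊤) (P : Ideal R)
    (hP : P ∈ associatedPrimes R (M ⧸ N)) :
    P ∉ associatedPrimes R (M ⧸ sat P N) :=
  not_mem_associatedPrimes_saturation_general (IsNoetherian.noetherian P) le_rfl N
end
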